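/- Let s, t be coprime positive integers. The size of the (s,t)-core partition corresponding via Anderson's bijection to an s/t-ballot word w equals (s²−1)(t²−1)/24 − (#STST(w) + #TSTS(w))/2. -/

import Mathlib

/-!
Write `m = s + t`. The heights `v i = t·i - m·#T(w.take i)`, `i < m`, represent every residue
class modulo `m` exactly once, because `t` is coprime to `m`. So with `v i = m q + r` (Euclidean
division) the elements of `A` are the numbers `r + m k`, `k < q`, and both `|A|` and `∑ A` become
polynomials in `m`, `∑ v i` and `∑ (v i)²`, the sums of `r` and `r²` being those over
`0, …, m - 1`.

It remains to evaluate the two power sums. Over the proper prefixes of any word `w`, the sums of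
`#S`, `#T`, `#S²`, `#S·#T` and `#T²` are polynomials in the six numbers `#S`, `#T`, `#ST`, `#TS`,
`#STS`, `#TST` (`prefix_stats`), as one sees by appending letters to `w`. The only combination of
`#STS` and `#TST` that survives in `∑ (v i)²` is `#T·#STS + #S·#TST`, and the shuffle identity
`#STST + #TSTS = #T·#STS + #S·#TST - #ST·#TS` (`shuffle`) turns it into the counts of the theorem.
-/

inductive Letter | S | T
deriving DecidableEq, Repr

open Letter

/-- Number of occurrences of `u` as a (not necessarily contiguous) subsequence of `w`. -/
def cnt (u w : List Letter) : ℕ := w.sublists.count u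


/-- `w` is an s/t-ballot word. -/
def IsBallot (s t : ℕ) (w : List Letter) : Prop :=
  w.count S = s ∧ w.count T = t ∧ ∀ p, p <+: w → p.count T * s ≤ p.count S * t

lemma cnt_nil (w : List Letter) : cnt [] w = 1 := by
  induction w using List.reverseRecOn with
  | nil => rfl
  | append_singleton w x ih =>
    unfold cnt at *
    rw [List.sublists_concat, List.count_append, ih]
    simp [List.count_eq_zero]

lemma cnt_concat (u w : List Letter) (x y : Letter) :
    cnt (u ++ [x]) (w ++ [y]) = cnt (u ++ [x]) w + if x = y then cnt u w else 0 := by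
  unfold cnt
  rw [List.sublists_concat, List.count_append]
  congr 1
  split_ifs with h
  · subst h
    exact List.count_map_of_injective w.sublists (· ++ [x]) (List.append_left_injective [x]) u
  · rw [List.count_eq_zero]
    simp only [List.mem_map, not_exists, not_and]
    intro a _ hab
    exact h (by simpa using (List.append_inj' hab rfl).2.symm)

/-- Recurrences, under appending a letter, for all the subword counts that occur below. -/
lemma cnt_rec (w : List Letter) :
    (cnt [S,T] (w ++ [S]) = cnt [S,T] w ∧ cnt [S,T] (w ++ [T]) = cnt [S,T] w + w.count S) ∧
    (cnt [T,S] (w ++ [T]) = cnt [T,S] w ∧ cnt [T,S] (w ++ [S]) = cnt [T,S] w + w.count T) ∧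
    (cnt [S,T,S] (w ++ [T]) = cnt [S,T,S] w ∧
      cnt [S,T,S] (w ++ [S]) = cnt [S,T,S] w + cnt [S,T] w) ∧
    (cnt [T,S,T] (w ++ [S]) = cnt [T,S,T] w ∧
      cnt [T,S,T] (w ++ [T]) = cnt [T,S,T] w + cnt [T,S] w) ∧
    (cnt [S,T,S,T] (w ++ [S]) = cnt [S,T,S,T] w ∧
      cnt [S,T,S,T] (w ++ [T]) = cnt [S,T,S,T] w + cnt [S,T,S] w) ∧
    (cnt [T,S,T,S] (w ++ [T]) = cnt [T,S,T,S] w ∧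
      cnt [T,S,T,S] (w ++ [S]) = cnt [T,S,T,S] w + cnt [T,S,T] w) := by
  have one : ∀ (x : Letter) (w : List Letter), cnt [x] w = w.count x := by
    intro x w
    induction w using List.reverseRecOn with
    | nil => cases x <;> rfl
    | append_singleton w y ih =>
      have := cnt_concat [] w x y
      rw [List.nil_append] at this
      rw [this, ih, cnt_nil, List.count_append, List.count_singleton]
      by_cases h : x = y
      · simp [h]
      · simp [h, Ne.symm h]
  have h2 := fun x => cnt_concat [S] w T x
  have h3 := fun x => cnt_concat [T] w S x
  have h4 := fun x => cnt_concat [S,T] w S x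
  have h5 := fun x => cnt_concat [T,S] w T x
  have h6 := fun x => cnt_concat [S,T,S] w T x
  have h7 := fun x => cnt_concat [T,S,T] w S x
  simp only [List.cons_append, List.nil_append] at h2 h3 h4 h5 h6 h7
  simp [h2, h3, h4, h5, h6, h7, one]

lemma cnt_ST_add_TS (w : List Letter) :
    (cnt [S,T] w : ℤ) + cnt [T,S] w = w.count S * w.count T := by
  induction w using List.reverseRecOn with
  | nil => decide
  | append_singleton w x ih =>
    obtain ⟨⟨a1, a2⟩, ⟨b1, b2⟩, -⟩ := cnt_rec w
    cases x <;> simp [a1, a2, b1, b2] <;> linear_combination ih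

/-- The shuffle identity: among the letter patterns produced by the products `#T·#STS`, `#S·#TST`
and `#ST·#TS`, everything except the two alternating words cancels. -/
lemma shuffle (w : List Letter) :
    (cnt [S,T,S,T] w : ℤ) + cnt [T,S,T,S] w =
      w.count T * cnt [S,T,S] w + w.count S * cnt [T,S,T] w - cnt [S,T] w * cnt [T,S] w := by
  induction w using List.reverseRecOn with
  | nil => decide
  | append_singleton w x ih =>
    obtain ⟨⟨a1, a2⟩, ⟨b1, b2⟩, ⟨c1, c2⟩, ⟨d1, d2⟩, ⟨e1, e2⟩, f1, f2⟩ := cnt_rec w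
    cases x <;> simp [a1, a2, b1, b2, c1, c2, d1, d2, e1, e2, f1, f2] <;> linear_combination ih

/-- Sum of `f` over the proper prefixes of `w`. -/
def prefixSum (f : List Letter → ℤ) (w : List Letter) : ℤ :=
  ∑ i ∈ Finset.range w.length, f (w.take i)

lemma prefixSum_concat (f : List Letter → ℤ) (w : List Letter) (x : Letter) :
    prefixSum f (w ++ [x]) = prefixSum f w + f w := by
  unfold prefixSum
  rw [List.length_append, List.length_singleton, Finset.sum_range_succ]
  congr 1
  · refine Finset.sum_congr rfl fun i hi => ?_
    rw [List.take_append_of_le_length (Finset.mem_range.1 hi).le]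
  · rw [List.take_left]

/-- First and second moments of the letter counts over the proper prefixes. -/
lemma prefix_stats (w : List Letter) :
    2 * prefixSum (fun p => p.count S) w = w.count S * (w.count S - 1) + 2 * cnt [S,T] w ∧
    2 * prefixSum (fun p => p.count T) w = w.count T * (w.count T - 1) + 2 * cnt [T,S] w ∧
    6 * prefixSum (fun p => (p.count S : ℤ) ^ 2) w =
      w.count S * (w.count S - 1) * (2 * w.count S - 1) + 6 * cnt [S,T] w * w.count S
        - 6 * cnt [S,T,S] w ∧
    6 * prefixSum (fun p => (p.count T : ℤ) ^ 2) w =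
      w.count T * (w.count T - 1) * (2 * w.count T - 1) + 6 * cnt [T,S] w * w.count T
        - 6 * cnt [T,S,T] w ∧
    2 * prefixSum (fun p => (p.count S : ℤ) * p.count T) w =
      cnt [S,T,S] w + cnt [T,S,T] w + cnt [S,T] w * (w.count T - 1)
        + cnt [T,S] w * (w.count S - 1) := by
  induction w using List.reverseRecOn with
  | nil => unfold prefixSum; simp [cnt]
  | append_singleton w x ih =>
    obtain ⟨⟨a1, a2⟩, ⟨b1, b2⟩, ⟨c1, c2⟩, ⟨d1, d2⟩, -⟩ := cnt_rec w
    obtain ⟨h1, h2, h3, h4, h5⟩ := ih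
    have hDE := cnt_ST_add_TS w
    simp only [prefixSum_concat]
    cases x <;> simp [a1, a2, b1, b2, c1, c2, d1, d2] <;>
      refine ⟨?_, ?_, ?_, ?_, ?_⟩
    · linear_combination h1
    · linear_combination h2
    · linear_combination h3
    · linear_combination h4
    · linear_combination h5 - hDE
    · linear_combination h1
    · linear_combination h2
    · linear_combination h3
    · linear_combination h4
    · linear_combination h5 - hDE

lemma two_sum_range (n : ℕ) : 2 * ∑ i ∈ Finset.range n, (i : ℤ) = n * (n - 1) := by
  induction n with
  | zero => simp
  | succ n ih => rw [Finset.sum_range_succ, mul_add, ih]; push_cast; ring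

lemma six_sum_range_sq (n : ℕ) :
    6 * ∑ i ∈ Finset.range n, (i : ℤ) ^ 2 = n * (n - 1) * (2 * n - 1) := by
  induction n with
  | zero => simp
  | succ n ih => rw [Finset.sum_range_succ, mul_add, ih]; push_cast; ring

lemma two_mul_choose_two (n : ℕ) : 2 * (n.choose 2 : ℤ) = n * (n - 1) := by
  rw [← two_sum_range, ← Nat.cast_sum, Finset.sum_range_id, Nat.choose_two_right]

/-- Sum over a set containing, for each `i < m`, exactly the naturals below `v i` congruent to it
modulo `m`, when the `v i` are pairwise incongruent. -/
lemma sum_runner (m : ℕ) (hm : 0 < m) (v : ℕ → ℤ)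
    (hinj : Set.InjOn (fun i => v i % (m : ℤ)) (Finset.range m))
    (A : Finset ℕ)
    (hA : ∀ n : ℕ, n ∈ A ↔ ∃ i < m, (n : ℤ) < v i ∧ (m : ℤ) ∣ (v i - n)) (f : ℤ → ℤ) :
    ∑ a ∈ A, f a = ∑ i ∈ Finset.range m, ∑ k ∈ Finset.range (v i / m).toNat,
      f (v i % m + m * k) := by
  have hm' : (0 : ℤ) < m := by exact_mod_cast hm
  have hr : ∀ i, 0 ≤ v i % (m : ℤ) := fun i => Int.emod_nonneg _ hm'.ne'
  have hval : ∀ (i k : ℕ), ((v i % m + m * k).toNat : ℤ) = v i % m + m * k :=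
    fun i k => Int.toNat_of_nonneg (by have := hr i; positivity)
  rw [Finset.sum_sigma']
  symm
  refine Finset.sum_nbij (fun x => (v x.1 % m + m * x.2).toNat) ?_ ?_ ?_ ?_
  · rintro ⟨i, k⟩ hx
    simp only [Finset.mem_sigma, Finset.mem_range] at hx
    obtain ⟨hi, hk⟩ := hx
    have hk' : (k : ℤ) + 1 ≤ v i / m := by omega
    have hd := Int.emod_add_mul_ediv (v i) m
    rw [hA]
    refine ⟨i, hi, ?_, ?_⟩
    · rw [hval]
      dsimp only
      nlinarith
    · rw [hval]
      exact ⟨v i / m - k, by dsimp only; linear_combination -hd⟩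
  · rintro ⟨i, k⟩ hx ⟨j, l⟩ hy h
    simp only [Finset.coe_sigma, Set.mem_sigma_iff, Finset.mem_coe, Finset.mem_range] at hx hy
    have h' : v i % (m : ℤ) + m * k = v j % m + m * l := by
      rw [← hval i k, ← hval j l]; exact congrArg Nat.cast h
    have hij : i = j := by
      apply hinj (by simpa using hx.1) (by simpa using hy.1)
      have := congrArg (· % (m : ℤ)) h'
      simpa using this
    subst hij
    have : (k : ℤ) = l := by
      apply mul_left_cancel₀ hm'.ne'
      linarith
    have : k = l := by exact_mod_cast this
    subst this
    rfl
  · intro n hn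
    obtain ⟨i, hi, hlt, hdvd⟩ := (hA n).1 (by simpa using hn)
    have hmod : v i % (m : ℤ) = n % m :=
      Int.emod_eq_emod_iff_emod_sub_eq_zero.2 (Int.emod_eq_zero_of_dvd hdvd)
    have hd := Int.emod_add_mul_ediv (v i) m
    have hd' := Int.emod_add_mul_ediv (n : ℤ) m
    have hlt' : (n : ℤ) / m < v i / m := by
      by_contra! hcon
      nlinarith
    have hn0 : 0 ≤ (n : ℤ) / m := by positivity
    refine ⟨⟨i, ((n : ℤ) / m).toNat⟩, ?_, ?_⟩
    · simp only [Finset.coe_sigma, Set.mem_sigma_iff, Finset.mem_coe, Finset.mem_range]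
      exact ⟨hi, by omega⟩
    · have := hval i ((n : ℤ) / m).toNat
      rw [Int.toNat_of_nonneg hn0, hmod, hd'] at this
      dsimp only
      rw [Int.toNat_of_nonneg hn0, hmod, hd']
      simp
  · rintro ⟨i, k⟩ _
    rw [hval]

theorem stmt12 (s t : ℕ) (hs : 0 < s) (ht : 0 < t) (hst : Nat.Coprime s t)
    (w : List Letter) (hw : IsBallot s t w)
    (v : ℕ → ℤ)
    (hv : ∀ i, v i = t * ((w.take i).count S) - s * ((w.take i).count T))
    (A : Finset ℕ)
    (hA : ∀ n : ℕ, n ∈ A ↔ ∃ i < s + t, (n : ℤ) < v i ∧ ((s : ℤ) + t) ∣ (v i - n)) :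
    24 * ((∑ a ∈ A, (a : ℤ)) - (A.card.choose 2 : ℤ))
      = ((s : ℤ) ^ 2 - 1) * ((t : ℤ) ^ 2 - 1)
        - 12 * (cnt [S,T,S,T] w + cnt [T,S,T,S] w) := by
  obtain ⟨hwS, hwT, hbal⟩ := hw
  have hcount : ∀ p : List Letter, p.count S + p.count T = p.length := by
    intro p
    induction p with
    | nil => rfl
    | cons x p ih => cases x <;> simp <;> omega
  have hlen : w.length = s + t := by rw [← hcount, hwS, hwT]
  obtain ⟨m, hm⟩ : ∃ m, m = s + t := ⟨_, rfl⟩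
  have hmZ : (m : ℤ) = s + t := by rw [hm]; push_cast; rfl
  have hm0 : 0 < m := by omega
  have hm' : (m : ℤ) ≠ 0 := by exact_mod_cast hm0.ne'
  have hv0 : ∀ i < m, 0 ≤ v i := by
    intro i _
    have := hbal (w.take i) (List.take_prefix i w)
    rw [hv]
    zify at this
    linarith
  have hvmod : ∀ i < m, v i = t * i - m * (w.take i).count T := by
    intro i hi
    have h1 := hcount (w.take i)
    rw [List.length_take, min_eq_left (by omega)] at h1
    have h2 : ((w.take i).count S : ℤ) + (w.take i).count T = i := by exact_mod_cast h1
    rw [hv, hmZ, ← h2]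
    ring
  have hcop : IsCoprime (m : ℤ) (t : ℤ) := by
    rw [Nat.isCoprime_iff_coprime, hm]
    simpa using hst
  have hinj : Set.InjOn (fun i => v i % (m : ℤ)) (Finset.range m) := by
    intro i hi j hj h
    have hi' : i < m := by simpa using hi
    have hj' : j < m := by simpa using hj
    have h1 : (m : ℤ) ∣ v i - v j := Int.ModEq.dvd (Int.ModEq.symm h)
    rw [hvmod i hi', hvmod j hj'] at h1
    have h2 : (m : ℤ) ∣ t * ((i : ℤ) - j) := by
      obtain ⟨c, hc⟩ := h1
      exact ⟨c + (w.take i).count T - (w.take j).count T, by linear_combination hc⟩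
    have h3 := hcop.dvd_of_dvd_mul_left h2
    have h4 := Int.eq_zero_of_abs_lt_dvd h3 (by rw [abs_lt]; omega)
    omega
  have hrun := sum_runner m hm0 v hinj A (by simpa only [hm, Nat.cast_add] using hA)
  -- the residues of the heights run over `0, …, m - 1`
  have hperm : ∀ g : ℤ → ℤ, ∑ i ∈ Finset.range m, g (v i % m) =
      ∑ i ∈ Finset.range m, g (i : ℤ) := by
    intro g
    have hval : ∀ i, ((v i % (m : ℤ)).toNat : ℤ) = v i % m :=
      fun i => Int.toNat_of_nonneg (Int.emod_nonneg _ hm')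
    have hmaps : ∀ i ∈ Finset.range m, (v i % (m : ℤ)).toNat ∈ Finset.range m := by
      intro i _
      have := Int.emod_lt_of_pos (v i) (by omega : (0 : ℤ) < m)
      have := hval i
      rw [Finset.mem_range]
      omega
    have hinj' : Set.InjOn (fun i => (v i % (m : ℤ)).toNat) (Finset.range m) := by
      intro i hi j hj h
      apply hinj hi hj
      dsimp only at h ⊢
      rw [← hval i, ← hval j, h]
    refine Finset.sum_nbij (fun i => (v i % (m : ℤ)).toNat) hmaps hinj' ?_ ?_
    · exact Finset.surjOn_of_injOn_of_card_le _ hmaps hinj' le_rfl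
    · intro i _
      rw [hval]
  have hr1 := (congrArg (2 * ·) (hperm fun x => x)).trans (two_sum_range m)
  have hr2 := (congrArg (6 * ·) (hperm fun x => x ^ 2)).trans (six_sum_range_sq m)
  have hq : ∀ i ∈ Finset.range m, ((v i / (m : ℤ)).toNat : ℤ) = v i / m := fun i hi =>
    Int.toNat_of_nonneg (Int.ediv_nonneg (hv0 i (by simpa using hi)) (by positivity))
  have hdiv : ∀ i, v i = v i % m + m * (v i / m) := fun i => (Int.emod_add_mul_ediv (v i) m).symm
  have hN : (A.card : ℤ) = ∑ i ∈ Finset.range m, v i / m := by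
    have := hrun fun _ => 1
    simp only [Finset.sum_const, nsmul_eq_mul, mul_one, Finset.card_range] at this
    rw [this]
    exact Finset.sum_congr rfl hq
  have hV1 : ∑ i ∈ Finset.range m, v i = ∑ i ∈ Finset.range m, v i % m + m * A.card := by
    rw [hN, Finset.mul_sum, ← Finset.sum_add_distrib]
    exact Finset.sum_congr rfl fun i _ => hdiv i
  have hSA : 2 * m * (∑ a ∈ A, (a : ℤ)) =
      ∑ i ∈ Finset.range m, v i ^ 2 - ∑ i ∈ Finset.range m, (v i % m) ^ 2 - m ^ 2 * A.card := by
    rw [hrun fun x => x, hN, Finset.mul_sum, Finset.mul_sum, ← Finset.sum_sub_distrib,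
      ← Finset.sum_sub_distrib]
    refine Finset.sum_congr rfl fun i hi => ?_
    rw [Finset.sum_add_distrib, Finset.sum_const, Finset.card_range, nsmul_eq_mul,
      ← Finset.mul_sum]
    have h1 := two_sum_range (v i / m).toNat
    rw [hq i hi] at h1 ⊢
    linear_combination (m : ℤ) ^ 2 * h1 - (v i + v i % m + m * (v i / m)) * hdiv i
  obtain ⟨p1, p2, p3, p4, p5⟩ := prefix_stats w
  have hX := shuffle w
  have hDE := cnt_ST_add_TS w
  rw [hwS, hwT] at *
  have hW1 : ∑ i ∈ Finset.range m, v i =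
      t * prefixSum (fun p => p.count S) w - s * prefixSum (fun p => p.count T) w := by
    unfold prefixSum
    rw [hlen, ← hm, Finset.mul_sum, Finset.mul_sum, ← Finset.sum_sub_distrib]
    exact Finset.sum_congr rfl fun i _ => hv i
  have hW2 : ∑ i ∈ Finset.range m, v i ^ 2 =
      t ^ 2 * prefixSum (fun p => (p.count S : ℤ) ^ 2) w
        - 2 * s * t * prefixSum (fun p => (p.count S : ℤ) * p.count T) w
        + s ^ 2 * prefixSum (fun p => (p.count T : ℤ) ^ 2) w := by
    unfold prefixSum
    rw [hlen, ← hm, Finset.mul_sum, Finset.mul_sum, Finset.mul_sum, ← Finset.sum_sub_distrib,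
      ← Finset.sum_add_distrib]
    refine Finset.sum_congr rfl fun i _ => ?_
    rw [hv i]
    ring
  have hC := two_mul_choose_two A.card
  generalize (cnt [S,T] w : ℤ) = D at *
  generalize (cnt [T,S] w : ℤ) = E at *
  generalize (cnt [S,T,S] w : ℤ) = y at *
  generalize (cnt [T,S,T] w : ℤ) = z at *
  obtain rfl : E = s * t - D := by linear_combination hDE
  have e1 : 2 * (A.card : ℤ) = 2 * D - s * t - (m - 1) := by
    apply mul_left_cancel₀ hm'
    rw [hW1] at hV1
    linear_combination -2 * hV1 + t * p1 - s * p2 - hr1 + (s * t - 2 * D) * hmZ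
  have e2 : 12 * (∑ a ∈ A, (a : ℤ)) = 2 * s ^ 2 * t ^ 2 + s * t + 6 * D ^ 2 - 6 * D * s * t
      - 6 * (cnt [S,T,S,T] w + cnt [T,S,T,S] w) - (m - 1) * (2 * m - 1) - 6 * m * A.card := by
    apply mul_left_cancel₀ hm'
    rw [hW2] at hSA
    rw [hX]
    have key : t ^ 2 * (s * (s - 1) * (2 * s - 1) + 6 * D * s - 6 * y)
        - 6 * s * t * (y + z + D * (t - 1) + (s * t - D) * (s - 1))
        + s ^ 2 * (t * (t - 1) * (2 * t - 1) + 6 * (s * t - D) * t - 6 * z)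
        = ((s : ℤ) + t) * (2 * s ^ 2 * t ^ 2 + s * t + 6 * D ^ 2 - 6 * D * s * t
          - 6 * (t * y + s * z - D * (s * t - D))) := by ring
    rw [← hmZ] at key
    linear_combination 6 * hSA - hr2 + t ^ 2 * p3 - 6 * s * t * p5 + s ^ 2 * p4 + key
  have e3 : (2 * (A.card : ℤ)) * (2 * A.card - 2) =
      (2 * D - s * t - (m - 1)) * (2 * D - s * t - (m - 1) - 2) := by rw [e1]
  rw [hmZ] at e1 e2 e3
  linear_combination 2 * e2 - 12 * hC - 3 * e3 - 6 * (s + t) * e1
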